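/- Consider the multi-agent setting with n agents, constraint maps K_j, cost gradients G(s,y,v)_j = ∂Θ_j(y,v)/∂v_j, dynamics maps f = (f_j), g = (g_j), and nonlocal term ψ(x) = (a_j·(1/T)∫₀^T x_j(ζ)dζ)_{j=1}^n. Assume: (H₁) and (H₂) hold for G and K(v) = Π_j K_j(v_{−j}) with constants l_G, η_G, l_K; L < 1, where L := (2·l_K²/η_G²)(l_G·√(4l_G²+2η_G²) + 2l_G² + η_G²); (H₃) and (H₄) hold for g and f with constants l_g, l_f; 0 < max_j |a_j| < 1; and there exists γ > 0 such that max_j|a_j|·(e^{γT}−1)/(γT) + ((l_f+ξ)/Γ(q))·sup_{s∈I}∫₀^s(s−ζ)^{q−1}e^{−γ(s−ζ)}dζ < 1, where ξ := l_g(1+√(κ/(1−L))) and κ := 2·l_G·(√(l_G²+η_G²/2)+l_G)²/(η_G²·√(l_G²+η_G²/2)). Then there exists exactly one pair (x*, u*) ∈ C(I,ℝⁿ) × C(I,ℝⁿ) such that for all s ∈ I: x*(s) = x*₀ + ψ(x*) + (1/Γ(q))∫₀^s(s−ζ)^{q−1}[f(ζ,x*(ζ)) + g(ζ,x*(ζ),u*(ζ))]dζ,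 u*(s) ∈ K(u*(s)), and ⟨G(s,x*(s),u*(s)), v − u*(s)⟩ ≥ 0 for all v ∈ K(u*(s)); equivalently, the time-dependent multi-agent optimization problem has a unique general Nash equilibrium. -/

import Mathlib

/-!
The control is eliminated first. For fixed `(s, x)`, the variational inequality for the Lipschitz,
strongly pseudomonotone map `G s x` on a closed convex set has a solution (`vi_exists`). No
fixed-point theorem of Brouwer type is needed: the Minty half-spaces are convex, and for convex
sets the KKM principle has an elementary proof (`kkm_convex`). Comparing the variational
inequalities on `K w₁` and `K w₂` through the projection of `u₂ - μ⁻¹ F₂ u₂` onto `K w₁` and letting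
`μ → 0` (`vi_stability`), the solution map is Lipschitz in `w` with constant `c = lK (1 + lG / ηG)`.
Since `L < 1` forces `c < 1`, Banach's theorem gives a unique solution `U s x` of the
quasi-variational inequality, Lipschitz in `(s, x)` with constant `(lG / ηG) / (1 - c)`, which is at
most `√(κ / (1 - L))` (`const_bounds`).

Substituting `u = U s x` leaves an integral equation for `x` alone, whose nonlinearity is Lipschitz
in `x` with constant `lf + ξ`. The smallness hypothesis says exactly that its right-hand side is a
contraction for the Bielecki norm `sup exp (-γ s) ‖x s‖` (`nonlocalTerm_est`, `frac_est`), so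
Banach's theorem applies once more (`bielecki_fixed`).
-/

open scoped RealInnerProductSpace
open Set

/-- Metric projection onto a set `C` of a real Hilbert space, characterized by the
variational inequality `⟪w - x, v - w⟫ ≥ 0` for all `v ∈ C`. -/
noncomputable def proj {H : Type*} [NormedAddCommGroup H] [InnerProductSpace ℝ H]
    (C : Set H) (x : H) : H :=
  letI : Nonempty H := ⟨0⟩
  Classical.epsilon fun w => w ∈ C ∧ ∀ v ∈ C, 0 ≤ ⟪w - x, v - w⟫

/-- The constant `L = (2 l_K²/η_G²)(l_G √(4l_G²+2η_G²) + 2l_G² + η_G²)`. -/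
noncomputable def Lconst (lK lG ηG : ℝ) : ℝ :=
  2 * lK ^ 2 / ηG ^ 2 * (lG * Real.sqrt (4 * lG ^ 2 + 2 * ηG ^ 2) + 2 * lG ^ 2 + ηG ^ 2)

/-- The constant `κ = 2 l_G (√(l_G²+η_G²/2)+l_G)² / (η_G² √(l_G²+η_G²/2))`. -/
noncomputable def kconst (lG ηG : ℝ) : ℝ :=
  2 * lG * (Real.sqrt (lG ^ 2 + ηG ^ 2 / 2) + lG) ^ 2 /
    (ηG ^ 2 * Real.sqrt (lG ^ 2 + ηG ^ 2 / 2))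

/-- The constant `ξ = l_g (1 + √(κ/(1-L)))`. -/
noncomputable def xiconst (lg lK lG ηG : ℝ) : ℝ :=
  lg * (1 + Real.sqrt (kconst lG ηG / (1 - Lconst lK lG ηG)))

/-- `(x, u)` solves the NFDQVI associated with the time-dependent multi-agent
optimization problem, with nonlocal term `ψ(x)_j = (a_j/T)∫₀ᵀ x_j`. -/
def IsMAOPSol {n : ℕ} (T q : ℝ) (x₀ : EuclideanSpace ℝ (Fin n)) (a : Fin n → ℝ)
    (f : ℝ → EuclideanSpace ℝ (Fin n) → EuclideanSpace ℝ (Fin n))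
    (g : ℝ → EuclideanSpace ℝ (Fin n) → EuclideanSpace ℝ (Fin n) →
      EuclideanSpace ℝ (Fin n))
    (G : ℝ → EuclideanSpace ℝ (Fin n) → EuclideanSpace ℝ (Fin n) →
      EuclideanSpace ℝ (Fin n))
    (K : EuclideanSpace ℝ (Fin n) → Set (EuclideanSpace ℝ (Fin n)))
    (x u : ℝ → EuclideanSpace ℝ (Fin n)) : Prop :=
  ContinuousOn x (Icc 0 T) ∧ ContinuousOn u (Icc 0 T) ∧
  (∀ s ∈ Icc (0:ℝ) T,
    x s = x₀ + (WithLp.equiv 2 (Fin n → ℝ)).symm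
        (fun j => a j * ((1 / T) * ∫ ζ in (0:ℝ)..T, x ζ j)) +
      (Real.Gamma q)⁻¹ •
        ∫ ζ in (0:ℝ)..s, ((s - ζ) ^ (q - 1)) • (f ζ (x ζ) + g ζ (x ζ) (u ζ))) ∧
  (∀ s ∈ Icc (0:ℝ) T, u s ∈ K (u s) ∧
    ∀ v ∈ K (u s), 0 ≤ ⟪G s (x s) (u s), v - u s⟫)

/-! ### Variational inequalities for strongly pseudomonotone maps -/

/-- An elementary KKM principle for the sublevel sets `{φ v ≤ 0}` of continuous convex functions,
which avoids Brouwer's theorem. By induction on the number of points, one minimizes the maximum of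
the `φ v` over the hull: a positive minimum could be lowered by moving towards a point, given by
the induction hypothesis, where all but one of the inequalities hold. -/
theorem kkm_convex {E : Type*} [NormedAddCommGroup E] [InnerProductSpace ℝ E]
    (φ : E → E → ℝ) (hc : ∀ v, Continuous (φ v)) (hconv : ∀ v, ConvexOn ℝ univ (φ v))
    (D : Set E)
    (hkkm : ∀ J : Finset E, (J : Set E) ⊆ D → ∀ u ∈ convexHull ℝ (J : Set E),
      ∃ v ∈ J, φ v u ≤ 0) (J : Finset E) :
    (J : Set E) ⊆ D → J.Nonempty → ∃ u ∈ convexHull ℝ (J : Set E), ∀ v ∈ J, φ v u ≤ 0 := by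
  classical
  induction J using Finset.strongInduction with
  | H J ih =>
    intro hJD hJ
    have hcont : Continuous fun u => J.sup' hJ (fun v => φ v u) :=
      Continuous.finset_sup'_apply hJ (fun v _ => hc v)
    have hcomp : IsCompact (convexHull ℝ (J : Set E)) :=
      J.finite_toSet.isCompact_convexHull ℝ
    obtain ⟨u, hu, hmin⟩ := hcomp.exists_isMinOn
      (convexHull_nonempty_iff.2 (Finset.coe_nonempty.2 hJ)) hcont.continuousOn
    by_cases hM : J.sup' hJ (fun v => φ v u) ≤ 0
    · exact ⟨u, hu, fun v hv => (Finset.le_sup' (fun v => φ v u) hv).trans hM⟩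
    push Not at hM
    set M := J.sup' hJ (fun v => φ v u) with hMdef
    obtain ⟨w, hw, hwu⟩ := hkkm J hJD u hu
    rcases (J.erase w).eq_empty_or_nonempty with he | hne
    · refine ⟨u, hu, fun v hv => ?_⟩
      have : v = w := by
        by_contra h
        have : v ∈ J.erase w := Finset.mem_erase.2 ⟨h, hv⟩
        simp [he] at this
      rwa [this]
    obtain ⟨y, hy, hyv⟩ := ih (J.erase w) (Finset.erase_ssubset hw)
      (fun v hv => hJD (Finset.mem_of_mem_erase hv)) hne
    have hy' : y ∈ convexHull ℝ (J : Set E) :=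
      convexHull_mono (by exact_mod_cast Finset.erase_subset w J) hy
    exfalso
    -- moving from `u` slightly towards `y` decreases the maximum strictly
    set t : ℝ := M / (M + |φ w y| + 1) with ht
    have hden : 0 < M + |φ w y| + 1 := by positivity
    have ht0 : 0 < t := by positivity
    have ht1 : t < 1 := by
      rw [ht, div_lt_one hden]; linarith [abs_nonneg (φ w y)]
    have htden : t * (M + |φ w y| + 1) = M := by rw [ht]; field_simp
    have hz : (1 - t) • u + t • y ∈ convexHull ℝ (J : Set E) :=
      convex_convexHull ℝ _ hu hy' (by linarith) ht0.le (by ring)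
    have h1 := hmin hz
    simp only [mem_ofPred_eq] at h1
    refine absurd h1 (not_le.2 ?_)
    rw [Finset.sup'_lt_iff]
    intro v hv
    have h2 := (hconv v).2 (mem_univ u) (mem_univ y) (by linarith : 0 ≤ 1 - t) ht0.le (by ring)
    simp only [smul_eq_mul] at h2
    refine lt_of_le_of_lt h2 ?_
    by_cases hvw : v = w
    · subst hvw
      have : t * φ v y ≤ t * |φ v y| := by gcongr; exact le_abs_self _
      nlinarith
    · have h3 := hyv v (Finset.mem_erase.2 ⟨hvw, hv⟩)
      have h4 : φ v u ≤ M := Finset.le_sup' (fun v => φ v u) hv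
      nlinarith

/-- Pseudomonotonicity gives the KKM property of the half-spaces `{u | ⟪F v, u - v⟫ ≤ 0}`; hence a
solution of the Minty inequality exists, and it solves the Stampacchia inequality by continuity. -/
theorem vi_exists_compact {E : Type*} [NormedAddCommGroup E] [InnerProductSpace ℝ E]
    (F : E → E) (hF : Continuous F) {η : ℝ} (hη : 0 < η) (D : Set E) (hD : IsCompact D)
    (hDc : Convex ℝ D) (hDn : D.Nonempty)
    (hpm : ∀ u₁ ∈ D, ∀ u₂ ∈ D, 0 ≤ ⟪F u₂, u₁ - u₂⟫ → η * ‖u₁ - u₂‖ ^ 2 ≤ ⟪F u₁, u₁ - u₂⟫) :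
    ∃ u ∈ D, ∀ v ∈ D, 0 ≤ ⟪F u, v - u⟫ := by
  classical
  have hfin := kkm_convex (fun v u => ⟪F v, u - v⟫) (fun v => by fun_prop)
    (fun v => by
      refine ⟨convex_univ, fun x _ y _ a b _ _ hab => le_of_eq ?_⟩
      have : a • x + b • y - v = a • (x - v) + b • (y - v) := by
        rw [smul_sub, smul_sub, sub_add_sub_comm, ← add_smul, hab, one_smul]
      simp only [this, inner_add_right, real_inner_smul_right, smul_eq_mul]) D
    (by
      intro J hJD u hu
      by_contra! hcon
      have huD : u ∈ D := convexHull_min hJD hDc hu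
      have hsub : (J : Set E) ⊆ {v | ⟪F u, v⟫ < ⟪F u, u⟫} := by
        intro v hv
        have h1 := hcon v hv
        have h2 := hpm u huD v (hJD hv) h1.le
        have h3 : 0 < ‖u - v‖ := by
          rw [norm_pos_iff]; intro h0; rw [h0, inner_zero_right] at h1; exact lt_irrefl _ h1
        have h4 : 0 < ⟪F u, u - v⟫ := lt_of_lt_of_le (by positivity) h2
        rw [inner_sub_right] at h4
        simp only [mem_ofPred_eq]; linarith
      have hcx : Convex ℝ {v | ⟪F u, v⟫ < ⟪F u, u⟫} :=
        convex_halfSpace_lt (innerSL ℝ (F u)).isLinear _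
      exact lt_irrefl ⟪F u, u⟫ (convexHull_min hsub hcx hu))
  -- compactness turns the finite intersection property into a Minty solution
  have hM : (D ∩ ⋂ v : D, {u | ⟪F v, u - v⟫ ≤ 0}).Nonempty := by
    refine hD.inter_iInter_nonempty _ (fun v => isClosed_le (by fun_prop) continuous_const) ?_
    intro J
    rcases J.eq_empty_or_nonempty with rfl | hJ
    · simpa using hDn
    have hJD : ((J.image (Subtype.val : D → E) : Finset E) : Set E) ⊆ D := by
      intro v hv
      simp only [Finset.coe_image, mem_image] at hv
      obtain ⟨w, _, rfl⟩ := hv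
      exact w.2
    obtain ⟨u, hu, hv⟩ := hfin _ hJD (hJ.image _)
    refine ⟨u, convexHull_min hJD hDc hu, ?_⟩
    simp only [mem_iInter, mem_ofPred_eq]
    exact fun v hvJ => hv v (Finset.mem_image_of_mem _ hvJ)
  obtain ⟨u, huD, hu⟩ := hM
  simp only [mem_iInter, mem_ofPred_eq, Subtype.forall] at hu
  refine ⟨u, huD, fun v hv => ?_⟩
  -- Minty's trick: test with `u + t (v - u)` and let `t → 0⁺`
  have hlim : Filter.Tendsto (fun t : ℝ => ⟪F (u + t • (v - u)), v - u⟫)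
      (nhdsWithin 0 (Ioi 0)) (nhds ⟪F u, v - u⟫) := by
    have : Continuous fun t : ℝ => ⟪F (u + t • (v - u)), v - u⟫ := by fun_prop
    have h := this.tendsto 0
    simp only [zero_smul, add_zero] at h
    exact h.mono_left nhdsWithin_le_nhds
  refine ge_of_tendsto hlim ?_
  filter_upwards [Ioo_mem_nhdsGT (show (0 : ℝ) < 1 by norm_num)] with t ht
  have hmem : u + t • (v - u) ∈ D := hDc.add_smul_sub_mem huD hv ⟨ht.1.le, ht.2.le⟩
  have h := hu _ hmem
  rw [show u - (u + t • (v - u)) = (-t) • (v - u) by rw [neg_smul]; abel,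
    real_inner_smul_right] at h
  nlinarith [ht.1]

/-- Existence on an unbounded closed convex set: solve on the intersection with a ball centred at
`p ∈ C`, of radius larger than the a priori bound `‖F p‖ / η` on the distance from `p` to a solution. -/
theorem vi_exists {E : Type*} [NormedAddCommGroup E] [InnerProductSpace ℝ E]
    [FiniteDimensional ℝ E]
    (F : E → E) (hF : Continuous F) {η : ℝ} (hη : 0 < η) (C : Set E) (hC : IsClosed C)
    (hCc : Convex ℝ C) (hCn : C.Nonempty)
    (hpm : ∀ u₁ ∈ C, ∀ u₂ ∈ C, 0 ≤ ⟪F u₂, u₁ - u₂⟫ → η * ‖u₁ - u₂‖ ^ 2 ≤ ⟪F u₁, u₁ - u₂⟫) :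
    ∃ u ∈ C, ∀ v ∈ C, 0 ≤ ⟪F u, v - u⟫ := by
  have := FiniteDimensional.proper ℝ E
  obtain ⟨p, hp⟩ := hCn
  set R : ℝ := ‖F p‖ / η + 1 with hR
  have hR0 : 0 < R := by positivity
  obtain ⟨u, ⟨huC, huB⟩, hu⟩ := vi_exists_compact F hF hη (C ∩ Metric.closedBall p R)
    ((isCompact_closedBall p R).inter_left hC) (hCc.inter (convex_closedBall p R))
    ⟨p, hp, Metric.mem_closedBall_self hR0.le⟩
    (fun u₁ h₁ u₂ h₂ => hpm u₁ h₁.1 u₂ h₂.1)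
  -- the a priori bound puts `u` in the open ball
  have hlt : ‖p - u‖ < R := by
    have h1 := hpm p hp u huC (hu p ⟨hp, Metric.mem_closedBall_self hR0.le⟩)
    have h2 := real_inner_le_norm (F p) (p - u)
    rcases (norm_nonneg (p - u)).eq_or_lt with h0 | h0
    · rw [← h0]; exact hR0
    have h3 : η * ‖p - u‖ ≤ ‖F p‖ := by
      refine le_of_mul_le_mul_right ?_ h0
      nlinarith
    have : ‖p - u‖ ≤ ‖F p‖ / η := by rw [le_div_iff₀ hη]; linarith
    linarith
  refine ⟨u, huC, fun v hv => ?_⟩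
  have hcont : Continuous fun t : ℝ => ‖p - (u + t • (v - u))‖ := by fun_prop
  -- so a small step from `u` towards `v` stays in the ball
  have hev : ∀ᶠ t in nhdsWithin (0 : ℝ) (Ioi 0), ‖p - (u + t • (v - u))‖ < R := by
    refine nhdsWithin_le_nhds (hcont.continuousAt.eventually_lt continuousAt_const ?_)
    simpa using hlt
  have hIoo : ∀ᶠ t in nhdsWithin (0 : ℝ) (Ioi 0), t ∈ Ioo (0 : ℝ) 1 :=
    Ioo_mem_nhdsGT (by norm_num)
  obtain ⟨t, ht, htR⟩ := (hIoo.and hev).exists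
  have hmem : u + t • (v - u) ∈ C := hCc.add_smul_sub_mem huC hv ⟨ht.1.le, ht.2.le⟩
  have h := hu _ ⟨hmem, by
    rw [Metric.mem_closedBall, dist_comm, dist_eq_norm]; exact htR.le⟩
  rw [add_sub_cancel_left, real_inner_smul_right] at h
  exact nonneg_of_mul_nonneg_right h ht.1

/-- The `Classical.epsilon` in `proj` is realized by the nearest point. -/
theorem proj_spec {E : Type*} [NormedAddCommGroup E] [InnerProductSpace ℝ E]
    [CompleteSpace E] (C : Set E) (hC : IsClosed C) (hCc : Convex ℝ C) (hCn : C.Nonempty)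
    (x : E) : proj C x ∈ C ∧ ∀ v ∈ C, 0 ≤ ⟪proj C x - x, v - proj C x⟫ := by
  unfold proj
  refine Classical.epsilon_spec
    (p := fun w => w ∈ C ∧ ∀ v ∈ C, 0 ≤ ⟪w - x, v - w⟫) ?_
  obtain ⟨w, hw, h⟩ := exists_norm_eq_iInf_of_complete_convex hCn hC.isComplete hCc x
  refine ⟨w, hw, fun v hv => ?_⟩
  have := (norm_eq_iInf_iff_real_inner_le_zero hCc hw).1 h v hv
  rw [← neg_sub x w, inner_neg_left]
  linarith

theorem proj_eq {E : Type*} [NormedAddCommGroup E] [InnerProductSpace ℝ E]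
    [CompleteSpace E] (C : Set E) (hC : IsClosed C) (hCc : Convex ℝ C)
    (x w : E) (hw : w ∈ C) (h : ∀ v ∈ C, 0 ≤ ⟪w - x, v - w⟫) : proj C x = w := by
  obtain ⟨h1, h2⟩ := proj_spec C hC hCc ⟨w, hw⟩ x
  have h3 := h _ h1
  have h4 := h2 _ hw
  have h5 : ⟪proj C x - w, proj C x - w⟫ ≤ 0 := by
    have : ⟪proj C x - x, w - proj C x⟫ + ⟪w - x, proj C x - w⟫
        = - ⟪proj C x - w, proj C x - w⟫ := by
      rw [← neg_sub (proj C x) w, inner_neg_right,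
        show proj C x - x = (proj C x - w) + (w - x) by abel, inner_add_left]
      ring
    linarith
  exact sub_eq_zero.1 (real_inner_self_nonpos.1 h5)

/-- Comparison of the solutions of two variational inequalities with different maps and different
constraint sets. The number `D` bounds the distance between the maps, up to the factor `l`; strong
pseudomonotonicity is used on `K w₁` only. -/
theorem vi_stability {E : Type*} [NormedAddCommGroup E] [InnerProductSpace ℝ E]
    [CompleteSpace E] (F₁ F₂ : E → E) {η l lK D : ℝ} (hη : 0 < η) (hl : 0 < l)
    (K : E → Set E) (hKc : ∀ v, IsClosed (K v)) (hKx : ∀ v, Convex ℝ (K v))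
    (hKproj : ∀ u₁ u₂ ϖ : E, ‖proj (K u₂) ϖ - proj (K u₁) ϖ‖ ≤ lK * ‖u₂ - u₁‖)
    (hLip : ∀ u v, ‖F₁ u - F₂ v‖ ≤ l * (D + ‖u - v‖))
    (w₁ w₂ : E)
    (hpm : ∀ u₁ ∈ K w₁, ∀ u₂ ∈ K w₁, 0 ≤ ⟪F₁ u₂, u₁ - u₂⟫ →
      η * ‖u₁ - u₂‖ ^ 2 ≤ ⟪F₁ u₁, u₁ - u₂⟫)
    (u₁ u₂ : E) (h₁ : u₁ ∈ K w₁ ∧ ∀ v ∈ K w₁, 0 ≤ ⟪F₁ u₁, v - u₁⟫)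
    (h₂ : u₂ ∈ K w₂ ∧ ∀ v ∈ K w₂, 0 ≤ ⟪F₂ u₂, v - u₂⟫) :
    ‖u₁ - u₂‖ ≤ l / η * D + lK * (1 + l / η) * ‖w₁ - w₂‖ := by
  have hD : 0 ≤ D := by
    have := (norm_nonneg _).trans (hLip 0 0)
    simp only [sub_self, norm_zero, add_zero] at this
    exact nonneg_of_mul_nonneg_right this hl
  set δ := lK * ‖w₁ - w₂‖ with hδ
  -- `z` is the projection of `u₂ - μ⁻¹ F₂ u₂` onto `K w₁`; the parameter `μ` is sent to `0`
  have key : ∀ μ : ℝ, 0 < μ → ‖u₁ - u₂‖ ≤ δ + (l * (D + δ) + μ * δ) / η := by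
    intro μ hμ
    set ϖ := u₂ - μ⁻¹ • F₂ u₂ with hϖ
    set z := proj (K w₁) ϖ with hz
    -- `u₂` is its own projection onto `K w₂`, so the projection hypothesis bounds `‖z - u₂‖`
    have hp2 : proj (K w₂) ϖ = u₂ := by
      refine proj_eq _ (hKc _) (hKx _) _ _ h₂.1 fun v hv => ?_
      rw [hϖ, sub_sub_cancel, real_inner_smul_left]
      exact mul_nonneg (by positivity) (h₂.2 v hv)
    have hzu : ‖z - u₂‖ ≤ δ := by
      have := hKproj w₂ w₁ ϖ
      rwa [hp2] at this
    obtain ⟨hzK, hzv⟩ := proj_spec (K w₁) (hKc _) (hKx _) ⟨u₁, h₁.1⟩ ϖ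
    rw [← hz] at hzK hzv
    have e1 := hpm z hzK u₁ h₁.1 (h₁.2 z hzK)
    have e2 := hzv u₁ h₁.1
    have e3 : ⟪F₂ u₂, z - u₁⟫ ≤ μ * (‖z - u₂‖ * ‖z - u₁‖) := by
      rw [hϖ, show z - (u₂ - μ⁻¹ • F₂ u₂) = (z - u₂) + μ⁻¹ • F₂ u₂ by abel, inner_add_left,
        real_inner_smul_left, ← neg_sub z u₁, inner_neg_right, inner_neg_right] at e2
      have e4 := abs_real_inner_le_norm (z - u₂) (z - u₁)
      have e5 := neg_abs_le (⟪z - u₂, z - u₁⟫)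
      have e6 : μ⁻¹ * ⟪F₂ u₂, z - u₁⟫ ≤ ‖z - u₂‖ * ‖z - u₁‖ := by linarith
      rwa [inv_mul_le_iff₀ hμ] at e6
    have e7 : ⟪F₁ z - F₂ u₂, z - u₁⟫ ≤ l * (D + ‖z - u₂‖) * ‖z - u₁‖ :=
      (real_inner_le_norm _ _).trans (by gcongr; exact hLip _ _)
    rw [inner_sub_left] at e7
    have e8 : ‖z - u₁‖ ≤ (l * (D + δ) + μ * δ) / η := by
      have hδ0 : 0 ≤ δ := (norm_nonneg _).trans hzu
      rcases (norm_nonneg (z - u₁)).eq_or_lt with h0 | h0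
      · rw [← h0]; positivity
      rw [le_div_iff₀ hη]
      refine le_of_mul_le_mul_right ?_ h0
      have : (l * (D + ‖z - u₂‖) + μ * ‖z - u₂‖) * ‖z - u₁‖
          ≤ (l * (D + δ) + μ * δ) * ‖z - u₁‖ := by gcongr
      nlinarith
    calc ‖u₁ - u₂‖ = ‖(z - u₂) - (z - u₁)‖ := by congr 1; abel
      _ ≤ ‖z - u₂‖ + ‖z - u₁‖ := norm_sub_le _ _
      _ ≤ _ := add_le_add hzu e8
  have hlim : Filter.Tendsto (fun μ : ℝ => δ + (l * (D + δ) + μ * δ) / η)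
      (nhdsWithin 0 (Ioi 0)) (nhds (δ + (l * (D + δ) + 0 * δ) / η)) := by
    have : Continuous fun μ : ℝ => δ + (l * (D + δ) + μ * δ) / η := by fun_prop
    exact (this.tendsto 0).mono_left nhdsWithin_le_nhds
  have := ge_of_tendsto hlim (by filter_upwards [self_mem_nhdsWithin] with μ hμ using key μ hμ)
  refine this.trans (le_of_eq ?_)
  rw [hδ]; field_simp; ring

/-! ### Quasi-variational inequalities -/

/-- The contraction and Lipschitz constants coming from `vi_stability` are dominated by those of
the theorem. With `r = l / η` and `c = lK (1 + r)` one has `L ≥ 8 c² / 7` and `κ ≥ 8 r²`, so the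
second claim reduces to `1 - 8 c² / 7 ≤ 8 (1 - c)²`, that is, to `(7 - 8 c)² ≥ 0`. -/
theorem const_bounds {l η lK : ℝ} (hl : 0 < l) (hη : 0 < η) (hlK : 0 ≤ lK)
    (hL : Lconst lK l η < 1) :
    lK * (1 + l / η) < 1 ∧
      l / η / (1 - lK * (1 + l / η)) ≤ Real.sqrt (kconst l η / (1 - Lconst lK l η)) := by
  set m := Real.sqrt (l ^ 2 + η ^ 2 / 2) with hm
  have hm0 : 0 < m := Real.sqrt_pos.2 (by positivity)
  have hm2 : m ^ 2 = l ^ 2 + η ^ 2 / 2 := Real.sq_sqrt (by positivity)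
  have hsq : Real.sqrt (4 * l ^ 2 + 2 * η ^ 2) = 2 * m := by
    rw [show 4 * l ^ 2 + 2 * η ^ 2 = (2 * m) ^ 2 by rw [mul_pow, hm2]; ring]
    exact Real.sqrt_sq (by positivity)
  have hlm : l ≤ m := Real.le_sqrt_of_sq_le (by nlinarith)
  set r := l / η with hr
  have hr0 : 0 < r := by positivity
  set c := lK * (1 + r) with hc
  have hc0 : 0 ≤ c := by positivity
  have hLc : 8 / 7 * c ^ 2 ≤ Lconst lK l η := by
    have h1 : Lconst lK l η = lK ^ 2 * (4 * r * (m / η) + 4 * r ^ 2 + 2) := by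
      unfold Lconst; rw [hsq, hr]; field_simp; ring
    have h2 : r ≤ m / η := by rw [hr]; gcongr
    rw [h1, hc, mul_pow]
    have h3 : 8 / 7 * (1 + r) ^ 2 ≤ 4 * r * (m / η) + 4 * r ^ 2 + 2 := by
      nlinarith [mul_le_mul_of_nonneg_left h2 hr0.le, sq_nonneg (r - 1 / 6)]
    nlinarith [mul_le_mul_of_nonneg_left h3 (sq_nonneg lK)]
  have hκ : 8 * r ^ 2 ≤ kconst l η := by
    unfold kconst
    rw [← hm, le_div_iff₀ (by positivity), hr]
    have : 8 * (l / η) ^ 2 * (η ^ 2 * m) = 8 * l ^ 2 * m := by field_simp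
    rw [this]
    nlinarith [mul_nonneg hl.le (sq_nonneg (m - l))]
  have hc1 : c < 1 := by nlinarith
  refine ⟨hc1, (le_abs_self _).trans (Real.abs_le_sqrt ?_)⟩
  have h1c : 0 < 1 - c := by linarith
  rw [div_pow, div_le_div_iff₀ (by positivity) (by linarith)]
  calc r ^ 2 * (1 - Lconst lK l η) ≤ r ^ 2 * (8 * (1 - c) ^ 2) := by
        gcongr
        nlinarith [sq_nonneg (7 - 8 * c)]
    _ = 8 * r ^ 2 * (1 - c) ^ 2 := by ring
    _ ≤ kconst l η * (1 - c) ^ 2 := by gcongr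

/-- Solutions of the quasi-variational inequality are unique and depend Lipschitz continuously on
`(s, x)`; uniqueness is the case `(s₁, x₁) = (s₂, x₂)`. -/
theorem qvi_stability {E : Type*} [NormedAddCommGroup E] [InnerProductSpace ℝ E]
    [CompleteSpace E] (G : ℝ → E → E → E) (S : Set ℝ) {η l lK : ℝ} (hη : 0 < η) (hl : 0 < l)
    (K : E → Set E) (hKc : ∀ v, IsClosed (K v)) (hKx : ∀ v, Convex ℝ (K v))
    (hKproj : ∀ u₁ u₂ ϖ : E, ‖proj (K u₂) ϖ - proj (K u₁) ϖ‖ ≤ lK * ‖u₂ - u₁‖)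
    (hLip : ∀ s₁ ∈ S, ∀ s₂ ∈ S, ∀ x₁ x₂ u₁ u₂ : E,
      ‖G s₂ x₂ u₂ - G s₁ x₁ u₁‖ ≤ l * (|s₂ - s₁| + ‖x₂ - x₁‖ + ‖u₂ - u₁‖))
    (hpm : ∀ s ∈ S, ∀ x u : E, ∀ u₁ ∈ K u, ∀ u₂ ∈ K u,
      0 ≤ ⟪G s x u₂, u₁ - u₂⟫ → η * ‖u₁ - u₂‖ ^ 2 ≤ ⟪G s x u₁, u₁ - u₂⟫)
    (hc : lK * (1 + l / η) < 1) (s₁ : ℝ) (hs₁ : s₁ ∈ S) (s₂ : ℝ) (hs₂ : s₂ ∈ S)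
    (x₁ x₂ u₁ u₂ : E)
    (h₁ : u₁ ∈ K u₁ ∧ ∀ v ∈ K u₁, 0 ≤ ⟪G s₁ x₁ u₁, v - u₁⟫)
    (h₂ : u₂ ∈ K u₂ ∧ ∀ v ∈ K u₂, 0 ≤ ⟪G s₂ x₂ u₂, v - u₂⟫) :
    ‖u₁ - u₂‖ ≤ l / η / (1 - lK * (1 + l / η)) * (|s₁ - s₂| + ‖x₁ - x₂‖) := by
  have h := vi_stability (G s₁ x₁) (G s₂ x₂) (D := |s₁ - s₂| + ‖x₁ - x₂‖) hη hl K hKc hKx hKproj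
    (fun u v => hLip s₂ hs₂ s₁ hs₁ x₂ x₁ v u) u₁ u₂ (hpm s₁ hs₁ x₁ u₁) u₁ u₂ h₁ h₂
  rw [div_mul_eq_mul_div, le_div_iff₀ (by linarith)]
  linarith

/-- The map sending `w` to the solution of the variational inequality on the frozen set `K w` is a
contraction, and its fixed point solves the quasi-variational inequality. -/
theorem qvi_exists {E : Type*} [NormedAddCommGroup E] [InnerProductSpace ℝ E]
    [FiniteDimensional ℝ E] (F : E → E) {η l lK : ℝ} (hη : 0 < η) (hl : 0 < l) (hlK : 0 ≤ lK)
    (K : E → Set E) (hKn : ∀ v, (K v).Nonempty) (hKc : ∀ v, IsClosed (K v))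
    (hKx : ∀ v, Convex ℝ (K v))
    (hKproj : ∀ u₁ u₂ ϖ : E, ‖proj (K u₂) ϖ - proj (K u₁) ϖ‖ ≤ lK * ‖u₂ - u₁‖)
    (hLip : ∀ u v, ‖F u - F v‖ ≤ l * ‖u - v‖)
    (hpm : ∀ u : E, ∀ u₁ ∈ K u, ∀ u₂ ∈ K u,
      0 ≤ ⟪F u₂, u₁ - u₂⟫ → η * ‖u₁ - u₂‖ ^ 2 ≤ ⟪F u₁, u₁ - u₂⟫)
    (hc : lK * (1 + l / η) < 1) :
    ∃ u, u ∈ K u ∧ ∀ v ∈ K u, 0 ≤ ⟪F u, v - u⟫ := by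
  have := FiniteDimensional.complete ℝ E
  have hFc : Continuous F :=
    (LipschitzWith.of_dist_le_mul (K := ⟨l, hl.le⟩) fun u v => by
      rw [dist_eq_norm, dist_eq_norm]; exact hLip u v).continuous
  choose S hS using fun w => vi_exists F hFc hη (K w) (hKc w) (hKx w) (hKn w) (hpm w)
  have hcontr : ContractingWith ⟨lK * (1 + l / η), by positivity⟩ S := by
    refine ⟨by exact_mod_cast hc, LipschitzWith.of_dist_le_mul fun w₁ w₂ => ?_⟩
    rw [dist_eq_norm, dist_eq_norm]
    have h := vi_stability F F (D := 0) hη hl K hKc hKx hKproj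
      (fun u v => by simpa using hLip u v) w₁ w₂ (hpm w₁) _ _ (hS w₁) (hS w₂)
    rw [mul_zero, zero_add] at h
    exact h
  have hfix : S (hcontr.fixedPoint S) = hcontr.fixedPoint S := hcontr.fixedPoint_isFixedPt
  have h := hS (hcontr.fixedPoint S)
  rw [hfix] at h
  exact ⟨_, h⟩

/-! ### Fixed points in the Bielecki norm -/

/-- Banach's fixed point theorem on `C([0, T], E)` for the norm `sup exp (-γ s) ‖x s‖`, phrased for
functions on `ℝ` restricted to `[0, T]`. -/
theorem bielecki_fixed {E : Type*} [NormedAddCommGroup E] [NormedSpace ℝ E] [CompleteSpace E]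
    {T : ℝ} (hT : 0 < T) (γ : ℝ) {c : ℝ} (hc0 : 0 ≤ c) (hc1 : c < 1) (Op : (ℝ → E) → ℝ → E)
    (hcont : ∀ x, ContinuousOn x (Icc 0 T) → ContinuousOn (Op x) (Icc 0 T))
    (hest : ∀ x y, ContinuousOn x (Icc 0 T) → ContinuousOn y (Icc 0 T) → ∀ D, 0 ≤ D →
      (∀ s ∈ Icc 0 T, ‖x s - y s‖ ≤ D * Real.exp (γ * s)) →
      ∀ s ∈ Icc 0 T, ‖Op x s - Op y s‖ ≤ c * D * Real.exp (γ * s)) :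
    ∃ x, ContinuousOn x (Icc 0 T) ∧ (∀ s ∈ Icc 0 T, x s = Op x s) ∧
      ∀ x', ContinuousOn x' (Icc 0 T) → (∀ s ∈ Icc 0 T, x' s = Op x' s) →
        ∀ s ∈ Icc 0 T, x' s = x s := by
  -- rescaling by `exp (γ s)` turns the Bielecki norm into the sup norm
  let X : C(Icc (0 : ℝ) T, E) → ℝ → E := fun y s => Real.exp (γ * s) • y (projIcc 0 T hT.le s)
  have hX : ∀ y, Continuous (X y) := fun y => by
    have : Continuous (projIcc 0 T hT.le) := continuous_projIcc
    fun_prop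
  let Φ : C(Icc (0 : ℝ) T, E) → C(Icc (0 : ℝ) T, E) := fun y =>
    ⟨fun s => Real.exp (-(γ * s)) • Op (X y) s, by
      have h := (hcont (X y) (hX y).continuousOn).domRestrict
      have h2 : Continuous fun s : Icc (0 : ℝ) T => Real.exp (-(γ * s)) := by fun_prop
      exact h2.smul h⟩
  have hΦ : ContractingWith ⟨c, hc0⟩ Φ := by
    refine ⟨by exact_mod_cast hc1, LipschitzWith.of_dist_le_mul fun y₁ y₂ => ?_⟩
    have hcd : 0 ≤ c * dist y₁ y₂ := by positivity
    refine (ContinuousMap.dist_le hcd).2 fun s => ?_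
    have h := hest (X y₁) (X y₂) (hX _).continuousOn (hX _).continuousOn (dist y₁ y₂) dist_nonneg
      (fun s _ => by
        change ‖Real.exp (γ * s) • _ - Real.exp (γ * s) • _‖ ≤ _
        rw [← smul_sub, norm_smul, Real.norm_of_nonneg (Real.exp_nonneg _), mul_comm]
        gcongr
        rw [← dist_eq_norm]
        exact ContinuousMap.dist_apply_le_dist _) s s.2
    change dist (Real.exp (-(γ * s)) • Op (X y₁) s) (Real.exp (-(γ * s)) • Op (X y₂) s) ≤ _
    rw [dist_eq_norm, ← smul_sub, norm_smul, Real.norm_of_nonneg (Real.exp_nonneg _)]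
    calc Real.exp (-(γ * s)) * ‖Op (X y₁) s - Op (X y₂) s‖
        ≤ Real.exp (-(γ * s)) * (c * dist y₁ y₂ * Real.exp (γ * s)) := by gcongr
      _ = c * dist y₁ y₂ * (Real.exp (-(γ * s)) * Real.exp (γ * s)) := by ring
      _ = c * dist y₁ y₂ := by rw [← Real.exp_add]; simp
  set y := hΦ.fixedPoint Φ with hy
  have hfix : Φ y = y := hΦ.fixedPoint_isFixedPt
  have hxeq : ∀ s ∈ Icc 0 T, X y s = Op (X y) s := by
    intro s hs
    have h := congrArg (fun z : C(Icc (0 : ℝ) T, E) => z ⟨s, hs⟩) hfix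
    change Real.exp (-(γ * s)) • Op (X y) s = y ⟨s, hs⟩ at h
    change Real.exp (γ * s) • y (projIcc 0 T hT.le s) = _
    rw [projIcc_of_mem hT.le hs, ← h, smul_smul, ← Real.exp_add]
    simp
  refine ⟨X y, (hX y).continuousOn, hxeq, fun x' hx' hx'eq => ?_⟩
  -- the Bielecki distance `D` between two fixed points satisfies `D ≤ c D`, hence vanishes
  have hdc : ContinuousOn (fun s => Real.exp (-(γ * s)) * ‖x' s - X y s‖) (Icc 0 T) := by
    have := (hX y).continuousOn (s := Icc 0 T)
    fun_prop
  obtain ⟨t, ht, hmax⟩ := isCompact_Icc.exists_isMaxOn (nonempty_Icc.2 hT.le) hdc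
  set D := Real.exp (-(γ * t)) * ‖x' t - X y t‖ with hD
  have hD0 : 0 ≤ D := by positivity
  have hbd : ∀ s ∈ Icc 0 T, ‖x' s - X y s‖ ≤ D * Real.exp (γ * s) := by
    intro s hs
    have h : Real.exp (-(γ * s)) * ‖x' s - X y s‖ ≤ D := hmax hs
    rw [Real.exp_neg, inv_mul_le_iff₀ (Real.exp_pos _)] at h
    linarith
  have h := hest x' (X y) hx' (hX y).continuousOn D hD0 hbd t ht
  rw [← hx'eq t ht, ← hxeq t ht] at h
  have hDc : D ≤ c * D := by
    calc D ≤ Real.exp (-(γ * t)) * (c * D * Real.exp (γ * t)) := by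
          rw [hD]; gcongr
      _ = c * D * (Real.exp (-(γ * t)) * Real.exp (γ * t)) := by ring
      _ = c * D := by rw [← Real.exp_add]; simp
  have hDz : D = 0 := by nlinarith
  intro s hs
  have h3 := hbd s hs
  rw [hDz, zero_mul] at h3
  exact sub_eq_zero.1 (norm_le_zero_iff.1 h3)

/-! ### The fractional integral and the nonlocal term -/

theorem frac_integrable {E : Type*} [NormedAddCommGroup E] [NormedSpace ℝ E]
    {q s : ℝ} (hq : 0 < q) (hs : 0 ≤ s) (φ : ℝ → E) (hφ : ContinuousOn φ (Icc 0 s)) :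
    IntervalIntegrable (fun ζ => (s - ζ) ^ (q - 1) • φ ζ) MeasureTheory.volume 0 s := by
  have h1 : IntervalIntegrable (fun ζ : ℝ => (s - ζ) ^ (q - 1)) MeasureTheory.volume 0 s := by
    have h := (intervalIntegral.intervalIntegrable_rpow' (a := 0) (b := s)
      (by linarith : -1 < q - 1)).comp_sub_left s
    simpa using h.symm
  exact h1.smul_continuousOn (by rwa [uIcc_of_le hs])

theorem frac_continuousOn {E : Type*} [NormedAddCommGroup E] [NormedSpace ℝ E]
    {q T : ℝ} (hq : 0 < q) (hT : 0 < T) (φ : ℝ → E) (hφ : ContinuousOn φ (Icc 0 T)) :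
    ContinuousOn (fun s => ∫ ζ in (0:ℝ)..s, (s - ζ) ^ (q - 1) • φ ζ) (Icc 0 T) := by
  set ψ : ℝ → E := fun t => φ (projIcc 0 T hT.le t) with hψ
  have hψc : Continuous ψ := by
    have h := hφ.domRestrict
    exact h.comp continuous_projIcc
  obtain ⟨B, hB⟩ := isCompact_Icc.exists_bound_of_continuousOn hφ
  have hψB : ∀ t, ‖ψ t‖ ≤ B := fun t => hB _ (projIcc 0 T hT.le t).2
  have hint : IntervalIntegrable (fun t : ℝ => (1 - t) ^ (q - 1)) MeasureTheory.volume 0 1 := by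
    have h := (intervalIntegral.intervalIntegrable_rpow' (a := 0) (b := 1)
      (by linarith : -1 < q - 1)).comp_sub_left 1
    simpa using h.symm
  -- the substitution `ζ = s t` moves the dependence on `s` out of the singular kernel
  have heq : EqOn (fun s => ∫ ζ in (0:ℝ)..s, (s - ζ) ^ (q - 1) • φ ζ)
      (fun s => s ^ q • ∫ t in (0:ℝ)..1, (1 - t) ^ (q - 1) • ψ (s * t)) (Icc 0 T) := by
    intro s hs
    rcases hs.1.eq_or_lt with h0 | h0
    · subst h0; simp [Real.zero_rpow hq.ne']
    have h := intervalIntegral.smul_integral_comp_mul_left (a := 0) (b := 1)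
      (fun ζ => (s - ζ) ^ (q - 1) • φ ζ) s
    rw [mul_zero, mul_one] at h
    simp only
    rw [← h, show s ^ q = s * s ^ (q - 1) by
      rw [Real.rpow_sub_one h0.ne']; field_simp, mul_smul]
    congr 1
    rw [← intervalIntegral.integral_smul]
    refine intervalIntegral.integral_congr (E := E) fun t ht => ?_
    rw [uIcc_of_le zero_le_one] at ht
    have hm : s * t ∈ Icc 0 T :=
      ⟨mul_nonneg hs.1 ht.1, (mul_le_of_le_one_right hs.1 ht.2).trans hs.2⟩
    simp only [hψ]
    rw [projIcc_of_mem hT.le hm, smul_smul, ← Real.mul_rpow hs.1 (by linarith [ht.2])]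
    congr 2
    ring
  refine ContinuousOn.congr (Continuous.continuousOn ?_) heq
  refine (Real.continuous_rpow_const hq.le).smul ?_
  refine intervalIntegral.continuous_of_dominated_interval (E := E)
    (bound := fun t => |(1 - t) ^ (q - 1)| * B) (fun s => ?_) (fun s => ?_)
    (hint.norm.mul_const B) ?_
  · exact hint.def'.aestronglyMeasurable.smul
      (by fun_prop : Continuous fun t => ψ (s * t)).aestronglyMeasurable
  · refine Filter.Eventually.of_forall fun t _ => ?_
    rw [norm_smul, Real.norm_eq_abs]
    gcongr
    exact hψB _
  · exact Filter.Eventually.of_forall fun t _ => by fun_prop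

/-- The nonlocal term `ψ(x)_j = (a_j / T) ∫₀ᵀ x_j`, written literally as in `IsMAOPSol`. -/
noncomputable def nonlocalTerm {n : ℕ} (T : ℝ) (a : Fin n → ℝ)
    (x : ℝ → EuclideanSpace ℝ (Fin n)) : EuclideanSpace ℝ (Fin n) :=
  (WithLp.equiv 2 (Fin n → ℝ)).symm (fun j => a j * ((1 / T) * ∫ ζ in (0:ℝ)..T, x ζ j))

/-- The nonlocal term is Lipschitz for the Bielecki norm `sup exp (-γ s) ‖x s‖`: its constant comes
from `∫₀ᵀ exp (γ ζ) dζ = (exp (γ T) - 1) / γ`. -/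
theorem nonlocalTerm_est {n : ℕ} {T γ A D : ℝ} (hT : 0 < T) (hγ : 0 < γ) (a : Fin n → ℝ)
    (hA0 : 0 ≤ A) (ha : ∀ j, |a j| ≤ A) (x y : ℝ → EuclideanSpace ℝ (Fin n))
    (hx : ContinuousOn x (Icc 0 T)) (hy : ContinuousOn y (Icc 0 T))
    (hxy : ∀ s ∈ Icc 0 T, ‖x s - y s‖ ≤ D * Real.exp (γ * s)) :
    ‖nonlocalTerm T a x - nonlocalTerm T a y‖
      ≤ A * ((Real.exp (γ * T) - 1) / (γ * T)) * D := by
  have hxi : IntervalIntegrable x MeasureTheory.volume 0 T :=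
    ContinuousOn.intervalIntegrable (by rwa [uIcc_of_le hT.le])
  have hyi : IntervalIntegrable y MeasureTheory.volume 0 T :=
    ContinuousOn.intervalIntegrable (by rwa [uIcc_of_le hT.le])
  set w : EuclideanSpace ℝ (Fin n) := ∫ ζ in (0:ℝ)..T, (x ζ - y ζ) with hw
  have hcoord : ∀ j, (nonlocalTerm T a x - nonlocalTerm T a y) j = a j * ((1 / T) * w j) := by
    intro j
    have e := fun (z : ℝ → EuclideanSpace ℝ (Fin n))
        (hz : IntervalIntegrable z MeasureTheory.volume 0 T) =>
      (EuclideanSpace.proj j : EuclideanSpace ℝ (Fin n) →L[ℝ] ℝ).intervalIntegral_comp_comm hz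
    have hwj : w j = (∫ ζ in (0:ℝ)..T, x ζ j) - ∫ ζ in (0:ℝ)..T, y ζ j := by
      have e1 : ∫ ζ in (0:ℝ)..T, x ζ j = (∫ ζ in (0:ℝ)..T, x ζ) j := e x hxi
      have e2 : ∫ ζ in (0:ℝ)..T, y ζ j = (∫ ζ in (0:ℝ)..T, y ζ) j := e y hyi
      rw [e1, e2, hw, intervalIntegral.integral_sub hxi hyi]
      rfl
    rw [hwj, mul_sub, mul_sub]
    rfl
  have h1 : ‖nonlocalTerm T a x - nonlocalTerm T a y‖ ≤ A * (1 / T) * ‖w‖ := by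
    refine abs_le_of_sq_le_sq' ?_ (by positivity) |>.2
    rw [mul_pow, EuclideanSpace.norm_sq_eq, EuclideanSpace.norm_sq_eq, Finset.mul_sum]
    refine Finset.sum_le_sum fun j _ => ?_
    rw [hcoord, ← mul_pow, norm_mul, norm_mul, Real.norm_eq_abs, Real.norm_of_nonneg
      (by positivity : 0 ≤ 1 / T), ← mul_assoc]
    gcongr
    exact ha j
  have h2 : ‖w‖ ≤ D * ((Real.exp (γ * T) - 1) / γ) := by
    have h3 : ‖w‖ ≤ ∫ ζ in (0:ℝ)..T, D * Real.exp (γ * ζ) := by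
      refine intervalIntegral.norm_integral_le_of_norm_le hT.le
        (Filter.Eventually.of_forall fun ζ hζ => hxy ζ (Ioc_subset_Icc_self hζ)) ?_
      exact (by fun_prop : Continuous fun ζ => D * Real.exp (γ * ζ)).intervalIntegrable _ _
    refine h3.trans (le_of_eq ?_)
    rw [intervalIntegral.integral_const_mul, intervalIntegral.integral_comp_mul_left _ hγ.ne',
      integral_exp, mul_zero, Real.exp_zero, smul_eq_mul]
    ring
  calc _ ≤ A * (1 / T) * ‖w‖ := h1
    _ ≤ A * (1 / T) * (D * ((Real.exp (γ * T) - 1) / γ)) := by gcongr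
    _ = _ := by field_simp

/-- Boundedness ensures that the `sSup` in the smallness condition is a genuine supremum. -/
theorem kernel_bddAbove {T q γ : ℝ} (hq : 0 < q) (hγ : 0 < γ) :
    BddAbove ((fun s => ∫ ζ in (0:ℝ)..s, (s - ζ) ^ (q - 1) *
      Real.exp (-(γ * (s - ζ)))) '' Icc (0:ℝ) T) := by
  refine ⟨T ^ q / q, ?_⟩
  rintro _ ⟨s, hs, rfl⟩
  have h1 := frac_integrable hq hs.1 (fun ζ => Real.exp (-(γ * (s - ζ)))) (by fun_prop)
  have h2 := frac_integrable hq hs.1 (fun _ => (1:ℝ)) continuousOn_const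
  simp only [smul_eq_mul, mul_one] at h1 h2
  calc _ ≤ ∫ ζ in (0:ℝ)..s, (s - ζ) ^ (q - 1) := by
        refine intervalIntegral.integral_mono_on hs.1 h1 h2 fun ζ hζ => ?_
        refine mul_le_of_le_one_right (Real.rpow_nonneg (by linarith [hζ.2]) _) ?_
        rw [Real.exp_le_one_iff]
        nlinarith [hζ.2]
    _ = s ^ q / q := by
        rw [intervalIntegral.integral_comp_sub_left (fun x => x ^ (q - 1)) s, sub_self, sub_zero,
          integral_rpow (Or.inl (by linarith)), sub_add_cancel, Real.zero_rpow hq.ne', sub_zero]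
    _ ≤ T ^ q / q := by gcongr; exacts [hs.1, hs.2]

/-- The fractional integral is Lipschitz for the Bielecki norm, with exactly the constant of the
smallness condition: `exp (γ ζ)` is split as `exp (γ s) * exp (-γ (s - ζ))`. -/
theorem frac_est {E : Type*} [NormedAddCommGroup E] [NormedSpace ℝ E]
    {q T γ M D : ℝ} (hq : 0 < q) (hγ : 0 < γ) (hM : 0 ≤ M) (hD : 0 ≤ D)
    (φ₁ φ₂ : ℝ → E) (h₁ : ContinuousOn φ₁ (Icc 0 T)) (h₂ : ContinuousOn φ₂ (Icc 0 T))
    (h : ∀ s ∈ Icc 0 T, ‖φ₁ s - φ₂ s‖ ≤ M * (D * Real.exp (γ * s))) (s : ℝ) (hs : s ∈ Icc 0 T) :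
    ‖(Real.Gamma q)⁻¹ • (∫ ζ in (0:ℝ)..s, (s - ζ) ^ (q - 1) • φ₁ ζ) -
      (Real.Gamma q)⁻¹ • (∫ ζ in (0:ℝ)..s, (s - ζ) ^ (q - 1) • φ₂ ζ)‖ ≤
      M / Real.Gamma q * sSup ((fun s => ∫ ζ in (0:ℝ)..s, (s - ζ) ^ (q - 1) *
          Real.exp (-(γ * (s - ζ)))) '' Icc (0:ℝ) T) * D * Real.exp (γ * s) := by
  have hΓ := Real.Gamma_pos_of_pos hq
  have hsub : Icc 0 s ⊆ Icc 0 T := Icc_subset_Icc_right hs.2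
  set k := ∫ ζ in (0:ℝ)..s, (s - ζ) ^ (q - 1) * Real.exp (-(γ * (s - ζ))) with hk
  have hkle := le_csSup (kernel_bddAbove (T := T) hq hγ) (mem_image_of_mem _ hs)
  rw [← hk] at hkle
  rw [← smul_sub, ← intervalIntegral.integral_sub (frac_integrable hq hs.1 φ₁ (h₁.mono hsub))
    (frac_integrable hq hs.1 φ₂ (h₂.mono hsub)), norm_smul, Real.norm_of_nonneg (by positivity)]
  have hb : ‖∫ ζ in (0:ℝ)..s, ((s - ζ) ^ (q - 1) • φ₁ ζ - (s - ζ) ^ (q - 1) • φ₂ ζ)‖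
      ≤ M * D * Real.exp (γ * s) * k := by
    have hi := frac_integrable hq hs.1 (fun ζ => Real.exp (-(γ * (s - ζ)))) (by fun_prop)
    simp only [smul_eq_mul] at hi
    rw [hk, ← intervalIntegral.integral_const_mul]
    refine intervalIntegral.norm_integral_le_of_norm_le hs.1
      (Filter.Eventually.of_forall fun ζ hζ => ?_) (hi.const_mul _)
    have hp : 0 ≤ (s - ζ) ^ (q - 1) := Real.rpow_nonneg (by linarith [hζ.2]) _
    rw [← smul_sub, norm_smul, Real.norm_of_nonneg hp]
    calc _ ≤ (s - ζ) ^ (q - 1) * (M * (D * Real.exp (γ * ζ))) := by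
          gcongr; exact h ζ (hsub (Ioc_subset_Icc_self hζ))
      _ = _ := by
          rw [show γ * ζ = γ * s + -(γ * (s - ζ)) by ring, Real.exp_add]; ring
  calc _ ≤ (Real.Gamma q)⁻¹ * (M * D * Real.exp (γ * s) * k) := by gcongr
    _ = M / Real.Gamma q * k * D * Real.exp (γ * s) := by ring
    _ ≤ _ := by gcongr

/-! ### Unique solvability -/

/-- Theorem 5.2: unique solvability of the time-dependent multi-agent optimization
problem (equivalently, of its associated NFDQVI). -/
theorem maop_unique_solution (T : ℝ) (hT : 0 < T) (q : ℝ) (hq : q ∈ Ioc (0:ℝ) 1)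
    (n : ℕ) (hn : 0 < n) (x₀ : EuclideanSpace ℝ (Fin n))
    -- constraint maps K_j : ℝ^{n-1} → 2^ℝ and the product constraint map K
    (K₀ : (j : Fin n) → ({i : Fin n // i ≠ j} → ℝ) → Set ℝ)
    (hK₀ : ∀ j v, (K₀ j v).Nonempty ∧ IsClosed (K₀ j v) ∧ Convex ℝ (K₀ j v))
    (K : EuclideanSpace ℝ (Fin n) → Set (EuclideanSpace ℝ (Fin n)))
    (hKdef : ∀ v, K v = {w : EuclideanSpace ℝ (Fin n) |
      ∀ j, w j ∈ K₀ j (fun i => v i.1)})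
    -- cost functions and their partial gradients
    (Θ : Fin n → (Fin n → ℝ) → (Fin n → ℝ) → ℝ)
    (hΘconv : ∀ j y v, ConvexOn ℝ univ (fun t => Θ j y (Function.update v j t)))
    (hΘdiff : ∀ j y v, ContDiff ℝ 1 (fun t => Θ j y (Function.update v j t)))
    (G : ℝ → EuclideanSpace ℝ (Fin n) → EuclideanSpace ℝ (Fin n) →
      EuclideanSpace ℝ (Fin n))
    (hGdef : ∀ s y v j, G s y v j = deriv (fun t => Θ j y (Function.update v j t)) (v j))
    (lG ηG : ℝ) (hlG : 0 < lG) (hηG : 0 < ηG)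
    -- (H₁)
    (hGLip : ∀ s₁ ∈ Icc (0:ℝ) T, ∀ s₂ ∈ Icc (0:ℝ) T,
      ∀ (x₁ x₂ u₁ u₂ : EuclideanSpace ℝ (Fin n)),
      ‖G s₂ x₂ u₂ - G s₁ x₁ u₁‖ ≤ lG * (|s₂ - s₁| + ‖x₂ - x₁‖ + ‖u₂ - u₁‖))
    (hGpm : ∀ s ∈ Icc (0:ℝ) T, ∀ (x u : EuclideanSpace ℝ (Fin n)),
      ∀ u₁ ∈ K u, ∀ u₂ ∈ K u,
      0 ≤ ⟪G s x u₂, u₁ - u₂⟫ → ηG * ‖u₁ - u₂‖ ^ 2 ≤ ⟪G s x u₁, u₁ - u₂⟫)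
    -- (H₂)
    (lK : ℝ) (hlK : 0 ≤ lK)
    (hKproj : ∀ (u₁ u₂ : EuclideanSpace ℝ (Fin n)) (ϖ : EuclideanSpace ℝ (Fin n)),
      ‖proj (K u₂) ϖ - proj (K u₁) ϖ‖ ≤ lK * ‖u₂ - u₁‖)
    -- L < 1
    (hL : Lconst lK lG ηG < 1)
    -- diagonal dynamics g = (g_j) and f = (f_j)
    (f₀ : Fin n → ℝ → ℝ → ℝ) (g₀ : Fin n → ℝ → ℝ → ℝ → ℝ)
    (f : ℝ → EuclideanSpace ℝ (Fin n) → EuclideanSpace ℝ (Fin n))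
    (g : ℝ → EuclideanSpace ℝ (Fin n) → EuclideanSpace ℝ (Fin n) →
      EuclideanSpace ℝ (Fin n))
    (hfdef : ∀ s y j, f s y j = f₀ j s (y j))
    (hgdef : ∀ s y v j, g s y v j = g₀ j s (y j) (v j))
    -- (H₃)
    (lg : ℝ) (hlg : 0 < lg)
    (hgc : ContinuousOn
      (fun p : ℝ × EuclideanSpace ℝ (Fin n) × EuclideanSpace ℝ (Fin n) =>
        g p.1 p.2.1 p.2.2)
      (Icc (0:ℝ) T ×ˢ (univ : Set (EuclideanSpace ℝ (Fin n) × EuclideanSpace ℝ (Fin n)))))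
    (hgLip : ∀ s ∈ Icc (0:ℝ) T, ∀ x₁ x₂ u₁ u₂ : EuclideanSpace ℝ (Fin n),
      ‖g s x₂ u₂ - g s x₁ u₁‖ ≤ lg * (‖x₂ - x₁‖ + ‖u₂ - u₁‖))
    -- (H₄)
    (lf : ℝ) (hlf : 0 < lf)
    (hfc : ContinuousOn (fun p : ℝ × EuclideanSpace ℝ (Fin n) => f p.1 p.2)
      (Icc (0:ℝ) T ×ˢ (univ : Set (EuclideanSpace ℝ (Fin n)))))
    (hfLip : ∀ s ∈ Icc (0:ℝ) T, ∀ x₁ x₂ : EuclideanSpace ℝ (Fin n),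
      ‖f s x₂ - f s x₁‖ ≤ lf * ‖x₂ - x₁‖)
    -- 0 < max_j |a_j| < 1
    (a : Fin n → ℝ) (A : ℝ) (hA : IsGreatest (range fun j => |a j|) A)
    (hA0 : 0 < A) (hA1 : A < 1)
    -- smallness condition involving the Bielecki parameter γ
    (γ : ℝ) (hγ : 0 < γ)
    (hsmall : A * ((Real.exp (γ * T) - 1) / (γ * T)) +
      (lf + xiconst lg lK lG ηG) / Real.Gamma q *
        sSup ((fun s => ∫ ζ in (0:ℝ)..s, (s - ζ) ^ (q - 1) *
          Real.exp (-(γ * (s - ζ)))) '' Icc (0:ℝ) T) < 1) :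
    ∃ (x u : ℝ → EuclideanSpace ℝ (Fin n)),
      IsMAOPSol T q x₀ a f g G K x u ∧
      ∀ (x' u' : ℝ → EuclideanSpace ℝ (Fin n)), IsMAOPSol T q x₀ a f g G K x' u' →
        ∀ s ∈ Icc (0:ℝ) T, x' s = x s ∧ u' s = u s := by
  obtain ⟨hq0, -⟩ := hq
  have hKn : ∀ v, (K v).Nonempty := fun v => by
    choose w hw using fun j => (hK₀ j (fun i => v i.1)).1
    refine ⟨WithLp.toLp 2 w, ?_⟩
    rw [hKdef]
    exact hw
  have hKc : ∀ v, IsClosed (K v) := fun v => by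
    rw [hKdef, show {w : EuclideanSpace ℝ (Fin n) | ∀ j, w j ∈ K₀ j (fun i => v i.1)}
      = ⋂ j, (fun w : EuclideanSpace ℝ (Fin n) => w j) ⁻¹' K₀ j (fun i => v i.1) by
        ext w; simp]
    exact isClosed_iInter fun j => (hK₀ j _).2.1.preimage (by fun_prop)
  have hKx : ∀ v, Convex ℝ (K v) := fun v => by
    rw [hKdef]
    intro x hx y hy α β hα hβ hαβ j
    exact (hK₀ j _).2.2 (hx j) (hy j) hα hβ hαβ
  obtain ⟨hc1, hcκ⟩ := const_bounds hlG hηG hlK hL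
  set Λ := lG / ηG / (1 - lK * (1 + lG / ηG)) with hΛ
  have hΛ0 : 0 ≤ Λ := div_nonneg (by positivity) (by linarith)
  have hU : ∀ s ∈ Icc (0:ℝ) T, ∀ x, ∃ u, u ∈ K u ∧ ∀ v ∈ K u, 0 ≤ ⟪G s x u, v - u⟫ :=
    fun s hs x => qvi_exists (G s x) hηG hlG hlK K hKn hKc hKx hKproj
      (fun u v => by simpa using hGLip s hs s hs x x v u) (hGpm s hs x) hc1
  -- `U s x` is the solution of the quasi-variational inequality at time `s` and state `x`
  choose! U hUs using hU
  have hUd : ∀ s₁ ∈ Icc (0:ℝ) T, ∀ s₂ ∈ Icc (0:ℝ) T, ∀ x₁ x₂,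
      ‖U s₁ x₁ - U s₂ x₂‖ ≤ Λ * (|s₁ - s₂| + ‖x₁ - x₂‖) := fun s₁ h₁ s₂ h₂ x₁ x₂ =>
    qvi_stability G (Icc 0 T) hηG hlG K hKc hKx hKproj hGLip hGpm hc1 s₁ h₁ s₂ h₂ x₁ x₂ _ _
      (hUs s₁ h₁ x₁) (hUs s₂ h₂ x₂)
  have hUuniq : ∀ s ∈ Icc (0:ℝ) T, ∀ x u, (u ∈ K u ∧ ∀ v ∈ K u, 0 ≤ ⟪G s x u, v - u⟫) →
      u = U s x := fun s hs x u hu => by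
    have h := qvi_stability G (Icc 0 T) hηG hlG K hKc hKx hKproj hGLip hGpm hc1 s hs s hs x x _ _
      hu (hUs s hs x)
    simp only [sub_self, abs_zero, norm_zero, add_zero, mul_zero] at h
    exact sub_eq_zero.1 (norm_le_zero_iff.1 h)
  have hUcont : ContinuousOn (fun p : ℝ × EuclideanSpace ℝ (Fin n) => U p.1 p.2)
      (Icc (0:ℝ) T ×ˢ univ) := by
    refine LipschitzOnWith.continuousOn (K := ⟨Λ * 2, by positivity⟩)
      (LipschitzOnWith.of_dist_le_mul fun p hp p' hp' => ?_)
    have h := hUd p.1 hp.1 p'.1 hp'.1 p.2 p'.2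
    rw [dist_eq_norm]
    refine h.trans ?_
    change _ ≤ Λ * 2 * dist p p'
    rw [mul_assoc]
    refine mul_le_mul_of_nonneg_left ?_ hΛ0
    have e1 : |p.1 - p'.1| ≤ dist p p' := by rw [← Real.dist_eq, Prod.dist_eq]; exact le_max_left _ _
    have e2 : ‖p.2 - p'.2‖ ≤ dist p p' := by
      rw [← dist_eq_norm, Prod.dist_eq]; exact le_max_right _ _
    linarith
  have hUx : ∀ x : ℝ → EuclideanSpace ℝ (Fin n), ContinuousOn x (Icc 0 T) →
      ContinuousOn (fun s => U s (x s)) (Icc 0 T) := fun x hx =>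
    hUcont.comp (f := fun s => (s, x s)) (continuousOn_id.prodMk hx)
      fun s hs => ⟨hs, mem_univ _⟩
  -- eliminating the control leaves a single integral equation with right-hand side `H x`
  let H : (ℝ → EuclideanSpace ℝ (Fin n)) → ℝ → EuclideanSpace ℝ (Fin n) :=
    fun x ζ => f ζ (x ζ) + g ζ (x ζ) (U ζ (x ζ))
  have hHc : ∀ x : ℝ → EuclideanSpace ℝ (Fin n), ContinuousOn x (Icc 0 T) →
      ContinuousOn (H x) (Icc 0 T) := fun x hx => by
    refine ContinuousOn.add ?_ ?_
    · exact hfc.comp (f := fun s => (s, x s)) (continuousOn_id.prodMk hx)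
        fun s hs => ⟨hs, mem_univ _⟩
    · exact hgc.comp (f := fun s => (s, x s, U s (x s)))
        (continuousOn_id.prodMk (hx.prodMk (hUx x hx))) fun s hs => ⟨hs, mem_univ _⟩
  set M := lf + xiconst lg lK lG ηG with hM
  have hM0 : 0 ≤ M := by rw [hM]; unfold xiconst; positivity
  have hHd : ∀ x y : ℝ → EuclideanSpace ℝ (Fin n), ∀ s ∈ Icc (0:ℝ) T,
      ‖H x s - H y s‖ ≤ M * ‖x s - y s‖ := by
    intro x y s hs
    have e1 := hfLip s hs (y s) (x s)
    have e2 := hgLip s hs (y s) (x s) (U s (y s)) (U s (x s))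
    have e3 := hUd s hs s hs (x s) (y s)
    rw [sub_self, abs_zero, zero_add] at e3
    have e4 := e3.trans (mul_le_mul_of_nonneg_right hcκ (norm_nonneg (x s - y s)))
    calc ‖H x s - H y s‖ = ‖(f s (x s) - f s (y s)) +
          (g s (x s) (U s (x s)) - g s (y s) (U s (y s)))‖ := by
            congr 1; simp only [H]; abel
      _ ≤ lf * ‖x s - y s‖ + lg * (‖x s - y s‖ + ‖U s (x s) - U s (y s)‖) :=
        (norm_add_le _ _).trans (add_le_add e1 e2)
      _ ≤ lf * ‖x s - y s‖ + lg * (‖x s - y s‖ +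
          Real.sqrt (kconst lG ηG / (1 - Lconst lK lG ηG)) * ‖x s - y s‖) := by gcongr
      _ = M * ‖x s - y s‖ := by rw [hM]; unfold xiconst; ring
  let Op : (ℝ → EuclideanSpace ℝ (Fin n)) → ℝ → EuclideanSpace ℝ (Fin n) := fun x s =>
    x₀ + nonlocalTerm T a x +
      (Real.Gamma q)⁻¹ • ∫ ζ in (0:ℝ)..s, ((s - ζ) ^ (q - 1)) • H x ζ
  set k := sSup ((fun s => ∫ ζ in (0:ℝ)..s, (s - ζ) ^ (q - 1) *
          Real.exp (-(γ * (s - ζ)))) '' Icc (0:ℝ) T) with hk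
  -- the contraction constant in `hsmall` is nonnegative
  have hk0 : 0 ≤ k := by
    refine Real.sSup_nonneg ?_
    rintro _ ⟨s, hs, rfl⟩
    refine intervalIntegral.integral_nonneg hs.1 fun ζ hζ => ?_
    exact mul_nonneg (Real.rpow_nonneg (by linarith [hζ.2]) _) (Real.exp_nonneg _)
  have hΓ := Real.Gamma_pos_of_pos hq0
  have hexp : 0 ≤ Real.exp (γ * T) - 1 := by
    have := Real.one_le_exp (by positivity : 0 ≤ γ * T)
    linarith
  obtain ⟨x, hx, hxeq, hxu⟩ := bielecki_fixed hT γ (by positivity) hsmall Op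
    (fun x hx => continuousOn_const.add
      ((frac_continuousOn hq0 hT (H x) (hHc x hx)).fun_const_smul _))
    (fun x y hx hy D hD hxy s hs => by
      have e1 := nonlocalTerm_est hT hγ a hA0.le (fun j => hA.2 (mem_range_self j)) x y hx hy hxy
      have e2 := frac_est (T := T) hq0 hγ hM0 hD (H x) (H y) (hHc x hx) (hHc y hy)
        (fun s hs => (hHd x y s hs).trans (by gcongr; exact hxy s hs)) s hs
      have e3 : 1 ≤ Real.exp (γ * s) := Real.one_le_exp (mul_nonneg hγ.le hs.1)
      have e4 : 0 ≤ A * ((Real.exp (γ * T) - 1) / (γ * T)) * D := by positivity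
      have e5 := mul_le_mul_of_nonneg_left e3 e4
      simp only [Op]
      rw [add_sub_add_comm, add_sub_add_left_eq_sub]
      refine (norm_add_le _ _).trans ((add_le_add e1 e2).trans ?_)
      rw [← hk]
      linarith)
  have hcongr : ∀ x' u' : ℝ → EuclideanSpace ℝ (Fin n),
      (∀ s ∈ Icc (0:ℝ) T, u' s = U s (x' s)) → ∀ s ∈ Icc (0:ℝ) T,
      (∫ ζ in (0:ℝ)..s, ((s - ζ) ^ (q - 1)) • (f ζ (x' ζ) + g ζ (x' ζ) (u' ζ))) =
        ∫ ζ in (0:ℝ)..s, ((s - ζ) ^ (q - 1)) • H x' ζ := by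
    intro x' u' hu' s hs
    refine intervalIntegral.integral_congr fun ζ hζ => ?_
    rw [uIcc_of_le hs.1] at hζ
    simp only [H]
    rw [hu' ζ ⟨hζ.1, hζ.2.trans hs.2⟩]
  refine ⟨x, fun s => U s (x s), ⟨hx, hUx x hx, fun s hs => hxeq s hs,
    fun s hs => hUs s hs (x s)⟩, ?_⟩
  rintro x' u' ⟨hx', -, hx'eq, hu'⟩ s hs
  have hu'U : ∀ s ∈ Icc (0:ℝ) T, u' s = U s (x' s) := fun s hs =>
    hUuniq s hs (x' s) (u' s) (hu' s hs)
  have hxx : x' s = x s := hxu x' hx' (fun s hs => by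
    rw [hx'eq s hs, hcongr x' u' hu'U s hs]; rfl) s hs
  exact ⟨hxx, by rw [hu'U s hs, hxx]⟩
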